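/- Let q be a prime power, K the field with q² elements with Frobenius automorphism σ(a) = a^q, B ∈ M_n(K) an invertible hermitian matrix, 𝒞(B) = {g ∈ M_n(K) : g invertible, g·B·g* = B} the corresponding unitary group, and let x ∈ 𝒞(B) with det x = 1. For m ≥ 1, say that x has an elementary divisor of exponent m if there exists a monic irreducible f ∈ K[t] with 2·dim ker(f(x)^m) > dim ker(f(x)^{m+1}) + dim ker(f(x)^{m−1}). Let r = gcd(q+1, gcd{m ≥ 1 : x has an elementary divisor of exponent m}). Then (q+1) · |{y ∈ 𝒞(B) : x·y = y·x and det y = 1}| = r · |{y ∈ 𝒞(B) : x·y = y·x}|. (Equivalently, the 𝒞(B)-conjugacy class of x splits into exactly r distinct conjugacy classes of the special unitary group {g ∈ 𝒞(B) : det g = 1}.) -/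

import Mathlib

open Matrix

/-- For a matrix over the field `K` with `q²` elements, `X* = (σX)ᵀ` where `σ(a) = a^q`
is the Frobenius automorphism. -/
def hermStar {K : Type*} [Field K] {n : ℕ} (q : ℕ) (X : Matrix (Fin n) (Fin n) K) :
    Matrix (Fin n) (Fin n) K :=
  (X.map fun a => a ^ q)ᵀ

/-- `x` has an elementary divisor of exponent `m`: there is a monic irreducible `f` with
`2·dim ker(f(x)^m) > dim ker(f(x)^{m+1}) + dim ker(f(x)^{m−1})`. -/
def HasEDOfExponent {K : Type*} [Field K] {n : ℕ}
    (x : Matrix (Fin n) (Fin n) K) (m : ℕ) : Prop :=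
  ∃ f : Polynomial K, f.Monic ∧ Irreducible f ∧
    Module.finrank K (LinearMap.ker (Matrix.toLin' ((Polynomial.aeval x f) ^ (m + 1)))) +
      Module.finrank K (LinearMap.ker (Matrix.toLin' ((Polynomial.aeval x f) ^ (m - 1)))) <
    2 * Module.finrank K (LinearMap.ker (Matrix.toLin' ((Polynomial.aeval x f) ^ m)))

section Nullity
open Module Polynomial

variable {K V : Type*} [Field K] [AddCommGroup V] [Module K V]

/-- The dimension of the kernel of the `j`-th power of an endomorphism. -/
noncomputable def powNullity (T : Module.End K V) (j : ℕ) : ℕ :=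
  Module.finrank K (LinearMap.ker (T ^ j))

variable [FiniteDimensional K V]

theorem powNullity_succ (T : Module.End K V) (j : ℕ) :
    powNullity T (j + 1) =
      powNullity T j + finrank K ↥(LinearMap.ker T ⊓ LinearMap.range (T ^ j)) := by
  have h := LinearMap.finrank_range_add_finrank_ker
    ((T ^ j).domRestrict (LinearMap.ker (T ^ (j + 1))))
  have hr : LinearMap.range ((T ^ j).domRestrict (LinearMap.ker (T ^ (j + 1)))) =
      LinearMap.ker T ⊓ LinearMap.range (T ^ j) := by
    ext z
    constructor
    · rintro ⟨⟨u, hu⟩, rfl⟩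
      refine ⟨?_, ⟨u, rfl⟩⟩
      simpa [pow_succ'] using hu
    · rintro ⟨hz, ⟨u, rfl⟩⟩
      exact ⟨⟨u, by simpa [pow_succ'] using hz⟩, rfl⟩
  have hk : finrank K (LinearMap.ker ((T ^ j).domRestrict (LinearMap.ker (T ^ (j + 1))))) =
      powNullity T j := by
    have : LinearMap.ker ((T ^ j).domRestrict (LinearMap.ker (T ^ (j + 1)))) =
        (LinearMap.ker (T ^ j)).comap (LinearMap.ker (T ^ (j + 1))).subtype := by
      ext z; simp
    rw [this]
    refine (Submodule.comapSubtypeEquivOfLe ?_).finrank_eq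
    intro u hu
    rw [LinearMap.mem_ker] at hu ⊢
    simp [pow_succ', hu]
  rw [hr, hk] at h
  unfold powNullity at *
  omega

theorem finrank_ker_inf_range_anti (T : Module.End K V) (j : ℕ) :
    finrank K ↥(LinearMap.ker T ⊓ LinearMap.range (T ^ (j + 1))) ≤
      finrank K ↥(LinearMap.ker T ⊓ LinearMap.range (T ^ j)) := by
  refine Submodule.finrank_mono (inf_le_inf_left _ ?_)
  rw [pow_succ]
  exact LinearMap.range_comp_le_range _ _

theorem powNullity_concave (T : Module.End K V) (j : ℕ) :
    powNullity T (j + 2) + powNullity T j ≤ 2 * powNullity T (j + 1) := by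
  have h1 := powNullity_succ T j
  have h2 : powNullity T (j + 2) = _ := powNullity_succ T (j + 1)
  have h3 := finrank_ker_inf_range_anti T j
  omega

@[simp] theorem powNullity_zero (T : Module.End K V) : powNullity T 0 = 0 := by
  simp [powNullity, Module.End.one_eq_id]

/-- If the defect of concavity of a sequence can only be nonzero at multiples of `r`, then the
eventual value of the sequence is a multiple of `r`. -/
theorem dvd_of_concave_defect {d : ℕ → ℕ} {r N : ℕ} (h0 : d 0 = 0)
    (hc : ∀ j, d (j + 2) + d j ≤ 2 * d (j + 1))
    (hr : ∀ j, d (j + 2) + d j < 2 * d (j + 1) → r ∣ j + 1) (hN : d (N + 1) = d N) :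
    r ∣ d N := by
  have key : ∀ j : ℕ, (r : ℤ) ∣ (j + 1) * d j - j * d (j + 1) := by
    intro j
    induction j with
    | zero => simp [h0]
    | succ j ih =>
      have h1 : (r : ℤ) ∣ ((j : ℤ) + 1) * (2 * d (j + 1) - d (j + 2) - d j) := by
        rcases (hc j).lt_or_eq with h | h
        · exact Dvd.dvd.mul_right (by exact_mod_cast hr j h) _
        · have : (2 * d (j + 1) - d (j + 2) - d j : ℤ) = 0 := by
            have : (d (j + 2) + d j : ℤ) = 2 * d (j + 1) := by exact_mod_cast h
            linarith
          simp [this]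
      have := dvd_add ih h1
      have e : ((j + 1 : ℕ) + 1 : ℤ) * d (j + 1) - (j + 1 : ℕ) * d (j + 2) =
          ((j : ℤ) + 1) * d j - j * d (j + 1) +
            ((j : ℤ) + 1) * (2 * d (j + 1) - d (j + 2) - d j) := by
        push_cast
        ring
      rw [e]
      exact this
  have := key N
  rw [hN] at this
  have h2 : ((N : ℤ) + 1) * d N - N * d N = d N := by ring
  rw [h2] at this
  exact_mod_cast this

theorem powNullity_eq_add {T : Module.End K V} {p q : Submodule K V} (hpq : IsCompl p q)
    (hp : ∀ v ∈ p, T v ∈ p) (hq : ∀ v ∈ q, T v ∈ q) (j : ℕ) :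
    powNullity T j = powNullity (T.restrict hp) j + powNullity (T.restrict hq) j := by
  have mem {s : Submodule K V} (hs : ∀ v ∈ s, T v ∈ s) (v : s) :
      ((T.restrict hs ^ j) v : V) = (T ^ j) v := by
    rw [Module.End.pow_restrict j (h' := Module.End.pow_apply_mem_of_forall_mem j hs)]
    rfl
  have hsup : LinearMap.ker (T ^ j) = (LinearMap.ker (T.restrict hp ^ j)).map p.subtype ⊔
      (LinearMap.ker (T.restrict hq ^ j)).map q.subtype := by
    apply le_antisymm
    · intro v hv
      obtain ⟨a, ha, b, hb, rfl⟩ :=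
        Submodule.mem_sup.mp (hpq.sup_eq_top ▸ Submodule.mem_top : v ∈ p ⊔ q)
      have ha' := Module.End.pow_apply_mem_of_forall_mem j hp a ha
      have hb' := Module.End.pow_apply_mem_of_forall_mem j hq b hb
      rw [LinearMap.mem_ker, map_add] at hv
      have ha0 : (T ^ j) a = 0 := by
        refine Submodule.disjoint_def.mp hpq.disjoint _ ha' ?_
        rw [eq_neg_of_add_eq_zero_left hv]
        exact q.neg_mem hb'
      have hb0 : (T ^ j) b = 0 := by rwa [ha0, zero_add] at hv
      refine Submodule.add_mem_sup ⟨⟨a, ha⟩, ?_, rfl⟩ ⟨⟨b, hb⟩, ?_, rfl⟩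
      · exact Subtype.ext ((mem hp _).trans ha0)
      · exact Subtype.ext ((mem hq _).trans hb0)
    · refine sup_le ?_ ?_
      · rintro _ ⟨v, hv, rfl⟩
        exact (mem hp v).symm.trans (congrArg Subtype.val hv)
      · rintro _ ⟨v, hv, rfl⟩
        exact (mem hq v).symm.trans (congrArg Subtype.val hv)
  have hinf : (LinearMap.ker (T.restrict hp ^ j)).map p.subtype ⊓
      (LinearMap.ker (T.restrict hq ^ j)).map q.subtype = ⊥ :=
    (hpq.disjoint.mono (Submodule.map_subtype_le _ _) (Submodule.map_subtype_le _ _)).eq_bot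
  have h := Submodule.finrank_sup_add_finrank_inf_eq
    ((LinearMap.ker (T.restrict hp ^ j)).map p.subtype)
    ((LinearMap.ker (T.restrict hq ^ j)).map q.subtype)
  rw [hinf, finrank_bot, add_zero, ← hsup, Submodule.finrank_map_subtype_eq,
    Submodule.finrank_map_subtype_eq] at h
  exact h

/-- A defect of concavity on an invariant direct summand is a defect on the whole space. -/
theorem powNullity_defect_of_restrict {T : Module.End K V} {p q : Submodule K V}
    (hpq : IsCompl p q) (hp : ∀ v ∈ p, T v ∈ p) (hq : ∀ v ∈ q, T v ∈ q) {j : ℕ}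
    (h : powNullity (T.restrict hp) (j + 2) + powNullity (T.restrict hp) j <
      2 * powNullity (T.restrict hp) (j + 1)) :
    powNullity T (j + 2) + powNullity T j < 2 * powNullity T (j + 1) := by
  have := powNullity_concave (T.restrict hq) j
  simp only [powNullity_eq_add hpq hp hq]
  omega

theorem powNullity_aeval_mul (T : Module.End K V) {f g : K[X]} (hfg : IsCoprime f g) (j : ℕ) :
    powNullity (aeval T (f * g)) j = powNullity (aeval T f) j + powNullity (aeval T g) j := by
  unfold powNullity
  rw [← map_pow, ← map_pow, ← map_pow, mul_pow,
    ← sup_ker_aeval_eq_ker_aeval_mul_of_coprime T (hfg.pow (m := j) (n := j))]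
  have h := Submodule.finrank_sup_add_finrank_inf_eq
    (LinearMap.ker (aeval T (f ^ j))) (LinearMap.ker (aeval T (g ^ j)))
  rwa [(disjoint_ker_aeval_of_isCoprime T (hfg.pow (m := j) (n := j))).eq_bot, finrank_bot,
    add_zero] at h

theorem powNullity_defect_mul (T : Module.End K V) {f g : K[X]} (hfg : IsCoprime f g) {j : ℕ}
    (h : powNullity (aeval T f) (j + 2) + powNullity (aeval T f) j <
      2 * powNullity (aeval T f) (j + 1)) :
    powNullity (aeval T (f * g)) (j + 2) + powNullity (aeval T (f * g)) j <
      2 * powNullity (aeval T (f * g)) (j + 1) := by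
  have := powNullity_concave (aeval T g) j
  simp only [powNullity_aeval_mul T hfg]
  omega

/-- If all the elementary divisors of `T` at the eigenvalue `μ` have exponent divisible by `r`,
then so is the algebraic multiplicity of `μ`. -/
theorem dvd_rootMultiplicity_charpoly (T : Module.End K V) (μ : K) {r : ℕ}
    (hr : ∀ j, powNullity (aeval T (X - C μ)) (j + 2) + powNullity (aeval T (X - C μ)) j <
      2 * powNullity (aeval T (X - C μ)) (j + 1) → r ∣ j + 1) :
    r ∣ T.charpoly.rootMultiplicity μ := by
  have hd : ∀ j, powNullity (aeval T (X - C μ)) j = finrank K (T.genEigenspace μ j) := by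
    intro j
    have e : aeval T (X - C μ) = T - μ • 1 := by simp [Algebra.algebraMap_eq_smul_one]
    rw [Module.End.genEigenspace_nat, e, powNullity]
  rw [← LinearMap.finrank_maxGenEigenspace_eq, Module.End.maxGenEigenspace_eq_genEigenspace_finrank,
    ← hd]
  refine dvd_of_concave_defect (powNullity_zero _) (powNullity_concave _) hr ?_
  rw [hd, hd, Module.End.genEigenspace_eq_genEigenspace_finrank_of_le (hk := Nat.le_succ _)]

/-- If all the elementary divisors of `S` have exponent divisible by `r`, then so are the algebraic
multiplicities of the eigenvalues of any endomorphism commuting with `S`. -/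
theorem dvd_rootMultiplicity_charpoly_of_commute [IsAlgClosed K] {S T : Module.End K V}
    (hST : Commute S T) {r : ℕ}
    (hr : ∀ (μ : K) (j : ℕ), powNullity (aeval S (X - C μ)) (j + 2) +
      powNullity (aeval S (X - C μ)) j <
      2 * powNullity (aeval S (X - C μ)) (j + 1) → r ∣ j + 1) (ν : K) :
    r ∣ T.charpoly.rootMultiplicity ν := by
  set N : Module.End K V := T - ν • 1 with hN
  have hSN : Commute S N := hST.sub_right ((Commute.one_right S).smul_right ν)
  have hcompl := LinearMap.isCompl_iSup_ker_pow_iInf_range_pow N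
  have hp0 : ⨆ n, LinearMap.ker (N ^ n) = T.maxGenEigenspace ν := by
    rw [← Module.End.iSup_genEigenspace_eq]
    simp_rw [Module.End.genEigenspace_nat, hN]
  rw [hp0] at hcompl
  set p := T.maxGenEigenspace ν
  set q := ⨅ n, LinearMap.range (N ^ n)
  have hp : ∀ v ∈ p, S v ∈ p := Module.End.mapsTo_maxGenEigenspace_of_comm hST.symm ν
  have hq : ∀ v ∈ q, S v ∈ q := by
    intro v hv
    rw [Submodule.mem_iInf] at hv ⊢
    intro n
    obtain ⟨w, rfl⟩ := hv n
    exact ⟨S w, (LinearMap.congr_fun (hSN.pow_right n) w).symm⟩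
  rw [← LinearMap.finrank_maxGenEigenspace_eq]
  change r ∣ finrank K p
  rw [← LinearMap.charpoly_natDegree (S.restrict hp),
    ← splits_iff_card_roots.mp (IsAlgClosed.splits _)]
  classical
  rw [← Multiset.toFinset_sum_count_eq]
  refine Finset.dvd_sum fun μ _ => ?_
  rw [count_roots]
  refine dvd_rootMultiplicity_charpoly _ μ fun j hj => hr μ j ?_
  have hp' : ∀ v ∈ p, (aeval S (X - C μ)) v ∈ p := fun v hv => by
    simpa using p.sub_mem (hp v hv) (p.smul_mem μ hv)
  have hq' : ∀ v ∈ q, (aeval S (X - C μ)) v ∈ q := fun v hv => by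
    simpa using q.sub_mem (hq v hv) (q.smul_mem μ hv)
  have e : aeval (S.restrict hp) (X - C μ) = (aeval S (X - C μ)).restrict hp' := by
    ext v
    simp
  rw [e] at hj
  exact powNullity_defect_of_restrict hcompl hp' hq' hj

end Nullity

section BaseChange
open Module Polynomial

variable {K L : Type*} [Field K] [Field L] {n : Type*} [Fintype n] [DecidableEq n]

theorem Matrix.rank_map_ringHom (φ : K →+* L) (A : Matrix n n K) :
    (A.map φ).rank = A.rank := by
  obtain ⟨V, U, e, hV, hU, h⟩ := A.exists_rank_normal_form
  have h' : V.map φ * A.map φ * U.map φ =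
      (fromBlocks (1 : Matrix (Fin A.rank) (Fin A.rank) L) 0 0
        (0 : Matrix (Fin (Fintype.card n - A.rank)) _ L)).submatrix e e := by
    rw [← Matrix.map_mul, ← Matrix.map_mul, h, ← Matrix.submatrix_map, Matrix.fromBlocks_map]
    simp
  have hV' : IsUnit (V.map φ).det := by
    rw [← RingHom.mapMatrix_apply, ← RingHom.map_det]
    exact ((isUnit_iff_isUnit_det _).mp hV).map φ
  have hU' : IsUnit (U.map φ).det := by
    rw [← RingHom.mapMatrix_apply, ← RingHom.map_det]
    exact ((isUnit_iff_isUnit_det _).mp hU).map φ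
  have := congrArg rank h'
  rw [rank_mul_eq_left_of_isUnit_det _ _ hU', rank_mul_eq_right_of_isUnit_det _ _ hV',
    rank_submatrix] at this
  rw [this, ← diagonal_one, ← diagonal_zero, fromBlocks_diagonal]
  classical
  rw [rank_diagonal, Fintype.card_subtype, Finset.card_filter,
    Fintype.sum_sum_type]
  simp

theorem powNullity_toLin' (A : Matrix n n K) (j : ℕ) :
    powNullity (toLin' A) j = finrank K (LinearMap.ker (toLin' (A ^ j))) := by
  rw [powNullity, toLin'_pow]

theorem powNullity_add_rank (A : Matrix n n K) (j : ℕ) :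
    powNullity (toLin' A) j + (A ^ j).rank = Fintype.card n := by
  have := LinearMap.finrank_range_add_finrank_ker (toLin' (A ^ j))
  rw [powNullity_toLin', add_comm, rank, ← toLin'_apply', this, finrank_fintype_fun_eq_card]

theorem powNullity_toLin'_map (φ : K →+* L) (A : Matrix n n K) (j : ℕ) :
    powNullity (toLin' (A.map φ)) j = powNullity (toLin' A) j := by
  have h1 := powNullity_add_rank A j
  have h2 := powNullity_add_rank (A.map φ) j
  rw [← Matrix.map_pow, Matrix.rank_map_ringHom] at h2
  omega

theorem aeval_toLin' (A : Matrix n n K) (f : K[X]) :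
    aeval (toLin' A) f = toLin' (aeval A f) :=
  (aeval_algHom_apply (toLinAlgEquiv' : Matrix n n K ≃ₐ[K] _).toAlgHom A f)

variable [PerfectField K] [Algebra K L] [Algebra.IsIntegral K L]

/-- The exponents of the elementary divisors do not change under a separable extension. -/
theorem exists_defect_of_defect_map (x : Matrix n n K) (μ : L) (j : ℕ)
    (h : powNullity (aeval (toLin' (x.map (algebraMap K L))) (X - C μ)) (j + 2) +
        powNullity (aeval (toLin' (x.map (algebraMap K L))) (X - C μ)) j <
      2 * powNullity (aeval (toLin' (x.map (algebraMap K L))) (X - C μ)) (j + 1)) :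
    ∃ f : K[X], f.Monic ∧ Irreducible f ∧
      powNullity (toLin' (aeval x f)) (j + 2) + powNullity (toLin' (aeval x f)) j <
        2 * powNullity (toLin' (aeval x f)) (j + 1) := by
  have hint : IsIntegral K μ := Algebra.IsIntegral.isIntegral μ
  refine ⟨minpoly K μ, minpoly.monic hint, minpoly.irreducible hint, ?_⟩
  have hsep : ((minpoly K μ).map (algebraMap K L)).Separable :=
    (PerfectField.separable_of_irreducible (minpoly.irreducible hint)).map
  obtain ⟨g, hg⟩ : X - C μ ∣ (minpoly K μ).map (algebraMap K L) := by
    rw [dvd_iff_isRoot, IsRoot, eval_map_algebraMap, minpoly.aeval]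
  have hcop : IsCoprime (X - C μ) g := by
    rw [hg] at hsep
    exact hsep.isCoprime
  have h2 := powNullity_defect_mul _ hcop h
  rw [← hg] at h2
  have e : aeval (toLin' (x.map (algebraMap K L))) ((minpoly K μ).map (algebraMap K L)) =
      toLin' ((aeval x (minpoly K μ)).map (algebraMap K L)) := by
    rw [aeval_toLin', aeval_map_algebraMap]
    congr 1
    exact aeval_algHom_apply ((Algebra.ofId K L).mapMatrix (m := n)) x _
  rw [e] at h2
  simpa only [powNullity_toLin'_map] using h2

end BaseChange

section InverseRoots
open Polynomial

variable {L : Type*} [Field L]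

theorem Polynomial.roots_reverse_prod_X_sub_C (S : Multiset L) (h0 : (0 : L) ∉ S) :
    (S.map fun a => X - C a).prod.reverse.roots = S.map (·⁻¹) := by
  induction S using Multiset.induction with
  | empty => rw [Multiset.map_zero, Multiset.prod_zero, ← C_1, reverse_C]; simp
  | cons a S ih =>
    have ha : a ≠ 0 := fun h => h0 (by simp [h])
    have h1 : (X - C a).reverse = C (-a) * (X - C a⁻¹) := by
      have : (X - C a).reverse = 1 - C a * X := by
        rw [reverse, natDegree_X_sub_C, reflect_sub, reflect_C, ← pow_one (X : L[X]),
          reflect_monomial]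
        simp
      rw [this, mul_sub, ← C_mul, neg_mul, mul_inv_cancel₀ ha]
      simp only [map_neg, map_one]
      ring
    have hne : (S.map fun a => X - C a).prod.reverse ≠ 0 := by
      rw [Ne, reverse_eq_zero]
      exact (monic_multiset_prod_of_monic _ _ fun a _ => monic_X_sub_C a).ne_zero
    have hne' : (X - C a).reverse ≠ 0 := by
      rw [Ne, reverse_eq_zero]
      exact X_sub_C_ne_zero a
    rw [Multiset.map_cons, Multiset.prod_cons, reverse_mul_of_domain,
      roots_mul (mul_ne_zero hne' hne), ih (fun h => h0 (Multiset.mem_cons_of_mem h)), h1,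
      roots_C_mul _ (neg_ne_zero.mpr ha), roots_X_sub_C, Multiset.map_cons]
    rfl

variable [IsAlgClosed L] {n : Type*} [Fintype n] [DecidableEq n]

theorem Matrix.roots_charpoly_inv (A : Matrix n n L) (hA : IsUnit A) :
    A⁻¹.charpoly.roots = A.charpoly.roots.map (·⁻¹) := by
  have hdet : A.det ≠ 0 := ((isUnit_iff_isUnit_det A).mp hA).ne_zero
  have h0 : (0 : L) ∉ A.charpoly.roots := fun h =>
    hdet (by rw [det_eq_prod_roots_charpoly]; exact Multiset.prod_eq_zero h)
  have hc : ((-1) ^ Fintype.card n * C (Ring.inverse A.det) : L[X]) =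
      C ((-1) ^ Fintype.card n * A.det⁻¹) := by
    simp [Ring.inverse_eq_inv']
  rw [charpoly_inv A hA, hc, roots_C_mul _ (by simp [hdet]), ← reverse_charpoly,
    (IsAlgClosed.splits A.charpoly).eq_prod_roots_of_monic A.charpoly_monic]
  rw [roots_reverse_prod_X_sub_C _ h0, roots_multiset_prod_X_sub_C]

/-- The determinant of a matrix whose inverse is a conjugate of a twist of it, and whose
eigenvalue multiplicities are divisible by `r`, is the `r`-th power of an element of norm one. -/
theorem exists_pow_eq_det (φ : L →+* L) (A : Matrix n n L) (hA : IsUnit A)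
    (hφ : A⁻¹.charpoly = A.charpoly.map φ) {r : ℕ} (hr0 : r ≠ 0)
    (hr : ∀ μ, r ∣ A.charpoly.rootMultiplicity μ) :
    ∃ δ : L, δ ^ r = A.det ∧ φ δ * δ = 1 := by
  classical
  obtain ⟨S, hS⟩ := Multiset.exists_smul_of_dvd_count A.charpoly.roots (k := r)
    (fun a _ => by rw [count_roots]; exact hr a)
  have hdet : S.prod ^ r = A.det := by
    rw [det_eq_prod_roots_charpoly, hS, Multiset.prod_nsmul]
  refine ⟨S.prod, hdet, ?_⟩
  have h := roots_charpoly_inv A hA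
  rw [hφ, (IsAlgClosed.splits A.charpoly).roots_map φ, hS, Multiset.map_nsmul,
    Multiset.map_nsmul] at h
  have h' : S.map φ = S.map (·⁻¹) := by
    ext a
    have := congrArg (Multiset.count a) h
    rw [Multiset.count_nsmul, Multiset.count_nsmul] at this
    exact Nat.eq_of_mul_eq_mul_left (Nat.pos_of_ne_zero hr0) this
  have hne : S.prod ≠ 0 := fun h0 => by
    rw [h0, zero_pow hr0] at hdet
    exact ((isUnit_iff_isUnit_det A).mp hA).ne_zero hdet.symm
  rw [map_multiset_prod, h', Multiset.prod_map_inv, Multiset.map_id', inv_mul_cancel₀ hne]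

end InverseRoots

section DetOfCentralizer
open Module Polynomial

variable {p k : ℕ} [Fact p.Prime] {q : ℕ} {K : Type*} [Field K] {n : ℕ}

theorem hasEDOfExponent_succ_iff (x : Matrix (Fin n) (Fin n) K) (j : ℕ) :
    HasEDOfExponent x (j + 1) ↔ ∃ f : K[X], f.Monic ∧ Irreducible f ∧
      powNullity (toLin' (aeval x f)) (j + 2) + powNullity (toLin' (aeval x f)) j <
        2 * powNullity (toLin' (aeval x f)) (j + 1) := by
  simp only [powNullity_toLin']
  rfl

/-- If `r` divides all the exponents of the elementary divisors of `x`, then the determinant of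
any unitary matrix commuting with `x` is an `r`-th power of an element of norm one. -/
theorem det_pow_eq_one_of_commute [Finite K] [CharP K p] (hq : q = p ^ k)
    {B x y : Matrix (Fin n) (Fin n) K} (hB : IsUnit B) (hy : IsUnit y)
    (hyB : y * B * hermStar q y = B) (hxy : x * y = y * x) {r : ℕ} (hr1 : r ∣ q + 1)
    (hr2 : ∀ m : ℕ, 1 ≤ m → HasEDOfExponent x m → r ∣ m) :
    y.det ^ ((q + 1) / r) = 1 := by
  let L := AlgebraicClosure K
  have : CharP L p := charP_of_injective_algebraMap (algebraMap K L).injective p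
  let σ : K →+* K := iterateFrobenius K p k
  let φ : L →+* L := iterateFrobenius L p k
  have hσ : ∀ a, σ a = a ^ q := fun a => by rw [hq]; rfl
  have hφ : ∀ a, φ a = a ^ q := fun a => by rw [hq]; rfl
  have hstar : hermStar q y = (y.map σ)ᵀ := by
    rw [hermStar]
    congr 2
    ext a
    exact (hσ a).symm
  have hr0 : r ≠ 0 := by
    rintro rfl
    simp at hr1
  have hBdet := (isUnit_iff_isUnit_det B).mp hB
  have hinv : y⁻¹ = B * (hermStar q y * B⁻¹) := by
    refine inv_eq_right_inv ?_
    rw [← mul_assoc, ← mul_assoc, hyB, mul_nonsing_inv _ hBdet]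
  have hcp : y⁻¹.charpoly = y.charpoly.map σ := by
    rw [hinv, charpoly_mul_comm, mul_assoc, nonsing_inv_mul _ hBdet, mul_one, hstar,
      charpoly_transpose, charpoly_map]
  let A := y.map (algebraMap K L)
  have hA : IsUnit A := hy.map (algebraMap K L).mapMatrix
  have hAinv : A⁻¹ = y⁻¹.map (algebraMap K L) := by
    refine inv_eq_right_inv ?_
    rw [← Matrix.map_mul, mul_nonsing_inv _ ((isUnit_iff_isUnit_det y).mp hy),
      Matrix.map_one _ (map_zero _) (map_one _)]
  have hAcp : A⁻¹.charpoly = A.charpoly.map φ := by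
    rw [hAinv, charpoly_map, hcp, charpoly_map, Polynomial.map_map, Polynomial.map_map]
    congr 1
    ext a
    simp [hσ, hφ]
  have hcomm : Commute (toLin' (x.map (algebraMap K L))) (toLin' A) := by
    have : x.map (algebraMap K L) * A = A * x.map (algebraMap K L) := by
      rw [← Matrix.map_mul, hxy, Matrix.map_mul]
    rw [Commute, SemiconjBy, Module.End.mul_eq_comp, Module.End.mul_eq_comp, ← toLin'_mul, this,
      toLin'_mul]
  obtain ⟨δ, hδ, hδ1⟩ := exists_pow_eq_det φ A hA hAcp hr0 (fun μ => by
    rw [← Matrix.charpoly_toLin']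
    refine dvd_rootMultiplicity_charpoly_of_commute hcomm (fun μ j h => ?_) μ
    exact hr2 (j + 1) (Nat.le_add_left 1 j)
      ((hasEDOfExponent_succ_iff x j).mpr (exists_defect_of_defect_map x μ j h)))
  apply (algebraMap K L).injective
  rw [map_pow, map_one, RingHom.map_det]
  change A.det ^ _ = 1
  rw [← hδ, ← pow_mul, Nat.mul_div_cancel' hr1, pow_succ, ← hφ, hδ1]

end DetOfCentralizer

section CyclicSubmodule
open Polynomial

variable {K V : Type*} [Field K] [AddCommGroup V] [Module K[X] V] {f : K[X]} {j : ℕ} {w : V}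

theorem exists_mul_smul_eq_pow_smul (hf : Irreducible f) (hw : f ^ (j + 1) • w = 0) {p : K[X]}
    (hp : p • w ≠ 0) : ∃ c : K[X], (c * p) • w = f ^ j • w := by
  have hp0 : p ≠ 0 := by
    rintro rfl
    simp at hp
  obtain ⟨i, p', hp', rfl⟩ := WfDvdMonoid.max_power_factor hp0 hf
  have hi : i ≤ j := by
    by_contra! h
    obtain ⟨d, rfl⟩ := Nat.exists_eq_add_of_le h
    apply hp
    rw [pow_add, mul_assoc, mul_comm, mul_smul, Nat.succ_eq_add_one, hw, smul_zero]
  obtain ⟨d, rfl⟩ := Nat.exists_eq_add_of_le hi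
  obtain ⟨a, b, hab⟩ : IsCoprime p' f := (hf.coprime_iff_not_dvd.mpr hp').symm
  refine ⟨a * f ^ d, ?_⟩
  have : a * f ^ d * (f ^ i * p') = f ^ (i + d) - b * f ^ (i + d + 1) := by
    rw [pow_add, pow_add, pow_add]
    linear_combination f ^ i * f ^ d * hab
  rw [this, sub_smul, mul_smul, hw, smul_zero, sub_zero]

theorem smul_eq_zero_iff_pow_dvd (hf : Irreducible f) (hw : f ^ (j + 1) • w = 0)
    (hw' : f ^ j • w ≠ 0) (p : K[X]) : p • w = 0 ↔ f ^ (j + 1) ∣ p := by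
  refine ⟨fun h => ?_, fun ⟨c, hc⟩ => by rw [hc, mul_comm, mul_smul, hw, smul_zero]⟩
  by_cases hp0 : p = 0
  · simp [hp0]
  obtain ⟨i, p', hp', rfl⟩ := WfDvdMonoid.max_power_factor hp0 hf
  by_contra hdvd
  have hi : i ≤ j := by
    by_contra! h'
    exact hdvd ((pow_dvd_pow f h').trans (dvd_mul_right _ _))
  obtain ⟨d, rfl⟩ := Nat.exists_eq_add_of_le hi
  obtain ⟨a, b, hab⟩ : IsCoprime p' f := (hf.coprime_iff_not_dvd.mpr hp').symm
  have : f ^ (i + d) = a * f ^ d * (f ^ i * p') + b * f ^ (i + d + 1) := by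
    rw [pow_add, pow_add, pow_add]
    linear_combination -f ^ i * f ^ d * hab
  rw [this, add_smul, mul_smul _ _ w, h, mul_smul b, hw, smul_zero, smul_zero,
    add_zero] at hw'
  exact hw' rfl

/-- For a nondegenerate hermitian form on a `K[X]`-module for which every polynomial has an
adjoint, an elementary divisor `f ^ (j + 1)` produces a nondegenerate cyclic submodule whose
annihilator is generated by `f ^ (j + 1) * g` with `g` prime to `f`. -/
theorem exists_cyclic_nondegenerate [StarRing K] {c₀ : K} (hc₀ : star c₀ ≠ c₀)
    (h : V → V → K) (τ : K[X] → K[X])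
    (add_left : ∀ u u' v, h (u + u') v = h u v + h u' v)
    (add_right : ∀ u v v', h u (v + v') = h u v + h u v')
    (smul_left : ∀ a u v, h ((C a : K[X]) • u) v = star a * h u v)
    (smul_right : ∀ a u v, h u ((C a : K[X]) • v) = a * h u v)
    (symm : ∀ u v, star (h u v) = h v u)
    (nondeg : ∀ v, (∀ t, h t v = 0) → v = 0)
    (adj_left : ∀ (p : K[X]) u v, h (p • u) v = h u (τ p • v))
    (adj_right : ∀ (p : K[X]) u v, h u (p • v) = h (τ p • u) v)
    (hf : Irreducible f) {u v : V} (hu : f ^ (j + 1) • u = 0)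
    (hv : ∀ t, h v (f ^ (j + 1) • t) = 0) (huv : h v (f ^ j • u) ≠ 0) :
    ∃ (g : K[X]) (w : V), IsCoprime f g ∧ g ≠ 0 ∧ (∀ p : K[X], p • w = 0 ↔ f ^ (j + 1) * g ∣ p) ∧
      ∀ p : K[X], (∀ s : K[X], h (s • w) (p • w) = 0) → p • w = 0 := by
  have zero_right : ∀ u, h u 0 = 0 := fun u => by
    simpa using add_right u 0 0
  have zero_left : ∀ u, h 0 u = 0 := fun u => by
    simpa using add_left 0 0 u
  have hv' : ∀ t, h (f ^ (j + 1) • t) v = 0 := fun t => by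
    rw [← symm, hv, star_zero]
  have adj_pow_right : ∀ (m : ℕ) (s t : V), h s (f ^ m • t) = h (τ f ^ m • s) t := by
    intro m
    induction m with
    | zero => intro s t; simp
    | succ m ih => intro s t; rw [pow_succ', mul_smul, adj_right, ih, ← mul_smul, pow_succ]
  have adj_pow_left : ∀ (m : ℕ) (s t : V), h (f ^ m • s) t = h s (τ f ^ m • t) := by
    intro m
    induction m with
    | zero => intro s t; simp
    | succ m ih => intro s t; rw [pow_succ', mul_smul, adj_left, ih, ← mul_smul, pow_succ]
  have hz : f ^ j • u ≠ 0 := by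
    intro h0
    rw [h0, zero_right] at huv
    exact huv rfl
  by_cases hff : f ∣ τ f
  · obtain ⟨c, hc⟩ := hff
    have hfv : f ^ (j + 1) • v = 0 := by
      refine nondeg _ fun t => ?_
      rw [adj_pow_right, hc, mul_pow, mul_smul, hv']
    obtain ⟨w, hw, hww⟩ : ∃ w, f ^ (j + 1) • w = 0 ∧ h w (f ^ j • w) ≠ 0 := by
      by_contra! H
      have key : ∀ c : K, c * h v (f ^ j • u) + star c * h u (f ^ j • v) = 0 := by
        intro c
        have hcu : f ^ (j + 1) • ((C c : K[X]) • u) = 0 := by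
          rw [smul_comm, hu, smul_zero]
        have h1 := H (v + (C c : K[X]) • u) (by rw [smul_add, hfv, hcu, add_zero])
        have h2 := H _ hcu
        have h3 := H _ hfv
        rw [smul_add, add_left, add_right, add_right, h2, h3, zero_add, add_zero,
          smul_comm, smul_right, smul_left] at h1
        exact h1
      have h1 := key 1
      have h2 := key c₀
      rw [star_one, one_mul, one_mul] at h1
      have : (c₀ - star c₀) * h v (f ^ j • u) = 0 := by
        linear_combination h2 - star c₀ * h1
      rcases mul_eq_zero.mp this with h | h
      · exact hc₀ (sub_eq_zero.mp h).symm
      · exact huv h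
    have hw0 : f ^ j • w ≠ 0 := by
      intro h0
      rw [h0, zero_right] at hww
      exact hww rfl
    refine ⟨1, w, isCoprime_one_right, one_ne_zero, fun p => ?_, fun p hp => ?_⟩
    · rw [mul_one, smul_eq_zero_iff_pow_dvd hf hw hw0]
    · by_contra hpw
      obtain ⟨c, hc⟩ := exists_mul_smul_eq_pow_smul hf hw hpw
      rw [← hc, mul_smul, adj_right, hp] at hww
      exact hww rfl
  · have hcop : IsCoprime f (τ f) := hf.coprime_iff_not_dvd.mpr hff
    have hτv : τ f ^ (j + 1) • v = 0 := nondeg _ fun t => by rw [← adj_pow_left, hv']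
    obtain ⟨g, hg⟩ : ∃ g : K[X], ∀ p : K[X], p • v = 0 ↔ g ∣ p := by
      refine ⟨Submodule.IsPrincipal.generator (Ideal.torsionOf K[X] V v), fun p => ?_⟩
      rw [← Submodule.IsPrincipal.mem_iff_generator_dvd, Ideal.mem_torsionOf_iff]
    have hgdvd : g ∣ τ f ^ (j + 1) := (hg _).mp hτv
    have hfg : IsCoprime f g := hcop.pow_right.of_isCoprime_of_dvd_right hgdvd
    have hg0 : g ≠ 0 := by
      rintro rfl
      refine hff ?_
      rw [pow_eq_zero_iff (Nat.succ_ne_zero j) |>.mp (zero_dvd_iff.mp hgdvd)]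
      exact dvd_zero f
    have hgv : g • v = 0 := (hg g).mpr dvd_rfl
    obtain ⟨a, b, hab⟩ : IsCoprime (f ^ (j + 1)) g := hfg.pow_left
    have hau : (b * g) • u = u := by
      rw [← sub_eq_iff_eq_add'.mpr hab.symm, sub_smul, one_smul, mul_smul, hu, smul_zero, sub_zero]
    have hav : (a * f ^ (j + 1)) • v = v := by
      rw [← sub_eq_iff_eq_add.mpr hab.symm, sub_smul, one_smul, mul_smul, hgv, smul_zero, sub_zero]
    have e_u : (b * g) • (u + v) = u := by
      rw [smul_add, hau, mul_smul, hgv, smul_zero, add_zero]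
    have e_v : (a * f ^ (j + 1)) • (u + v) = v := by
      rw [smul_add, hav, mul_smul, hu, smul_zero, zero_add]
    refine ⟨g, u + v, hfg, hg0, fun p => ⟨fun hp => ?_, ?_⟩, fun p hp => ?_⟩
    · refine hfg.pow_left.mul_dvd ?_ ?_
      · rw [← smul_eq_zero_iff_pow_dvd hf hu hz, ← e_u, smul_comm, hp, smul_zero]
      · rw [← hg, ← e_v, smul_comm, hp, smul_zero]
    · rintro ⟨c, rfl⟩
      rw [mul_comm, mul_smul, smul_add, mul_smul _ _ v, hgv, mul_comm, mul_smul, hu]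
      simp only [smul_zero, add_zero]
    · have hsv : ∀ s : K[X], h (s • v) (p • u) = 0 := by
        intro s
        have h1 := hp (s * (a * f ^ (j + 1)))
        have h2 : h (s • v) (p • v) = 0 := by
          have : p • v = f ^ (j + 1) • (p * a) • v := by
            conv_lhs => rw [← hav]
            rw [smul_smul, smul_smul]
            congr 1
            ring
          rw [this, adj_left, smul_comm, hv]
        rwa [mul_smul, e_v, smul_add, add_right, h2, add_zero] at h1
      have hpu : p • u = 0 := by
        by_contra hpu
        obtain ⟨c, hc⟩ := exists_mul_smul_eq_pow_smul hf hu hpu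
        rw [← hc, mul_smul, adj_right, hsv] at huv
        exact huv rfl
      rw [smul_add, hpu, zero_add]
      rw [smul_add, hpu, zero_add] at hp
      have hsu : ∀ s : K[X], h (s • u) (p • v) = 0 := fun s => by
        have h1 := hp (s * (b * g))
        rwa [mul_smul, e_u] at h1
      have hτu : τ p • u = 0 := by
        by_contra hpu
        obtain ⟨c, hc⟩ := exists_mul_smul_eq_pow_smul hf hu hpu
        have h1 := hsu c
        rw [adj_right, ← mul_smul, mul_comm, hc, ← symm, star_eq_zero] at h1
        exact huv h1
      obtain ⟨c, hc⟩ := (smul_eq_zero_iff_pow_dvd hf hu hz _).mp hτu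
      refine nondeg _ fun t => ?_
      rw [adj_right, hc, mul_smul, hv']

end CyclicSubmodule

section DetAeval
open Polynomial Matrix

variable {K L : Type*} [Field K] [Field L] {ι : Type*} [Fintype ι] [DecidableEq ι]

theorem Matrix.det_aeval [IsAlgClosed L] (A : Matrix ι ι L) (a : L[X]) :
    (aeval A a).det = (A.charpoly.roots.map fun α => a.eval α).prod := by
  have hs : A.charpoly.Splits := IsAlgClosed.splits _
  have hcard : A.charpoly.roots.card = Fintype.card ι := by
    rw [← hs.natDegree_eq_card_roots, charpoly_natDegree_eq_dim]
  have ha : a.Splits := IsAlgClosed.splits a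
  induction ha using Submonoid.closure_induction with
  | mem p hp =>
    obtain ⟨c, rfl⟩ | ⟨c, rfl⟩ := hp
    · simp [hcard, algebraMap_eq_diagonal]
    · have h1 := eval_charpoly A (-c)
      have h2 : aeval A (X + C c) = -(scalar ι (-c) - A) := by
        rw [neg_sub, map_add, aeval_X, aeval_C, map_neg, sub_neg_eq_add]
        rfl
      rw [h2, det_neg, ← h1, hs.eval_eq_prod_roots_of_monic A.charpoly_monic, ← hcard,
        ← Multiset.card_map (fun α => -c - α) A.charpoly.roots, ← Multiset.prod_map_neg,
        Multiset.map_map]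
      simp [add_comm]
  | one => simp
  | mul p q _ _ hp hq => simp [hp, hq, Multiset.prod_map_mul]

theorem Matrix.algebraMap_det_aeval [Algebra K L] [IsAlgClosed L] (A : Matrix ι ι K) (a : K[X]) :
    algebraMap K L (aeval A a).det = ((A.charpoly.aroots L).map fun α => aeval α a).prod := by
  have h := Matrix.det_aeval (A.map (algebraMap K L)) (a.map (algebraMap K L))
  rw [charpoly_map] at h
  simp only [eval_map_algebraMap] at h
  rw [aroots_def, ← h, RingHom.map_det]
  congr 1
  refine map_aeval_eq_aeval_map (φ := algebraMap K L) (ψ := (algebraMap K L).mapMatrix) ?_ a A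
  ext c : 1
  simp only [RingHom.comp_apply, algebraMap_eq_diagonal, RingHom.mapMatrix_apply]
  rw [diagonal_map (map_zero _)]
  rfl

/-- A matrix over a finite field with characteristic polynomial `f ^ m * g`, where `f` is
irreducible and prime to `g`, has a polynomial of any prescribed nonzero determinant `b ^ m`. -/
theorem Matrix.exists_det_aeval_eq_pow [Finite K] (A : Matrix ι ι K) {f g : K[X]} {m : ℕ}
    (hf : Irreducible f) (hfm : f.Monic) (hfg : IsCoprime f g) (hg : g ≠ 0)
    (hA : A.charpoly = f ^ m * g) (b : K) :
    ∃ a : K[X], (aeval A a).det = b ^ m := by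
  have : Fact (Irreducible f) := ⟨hf⟩
  let pb := AdjoinRoot.powerBasis hf.ne_zero
  have : Module.Finite K (AdjoinRoot f) := pb.finite
  have : Finite (AdjoinRoot f) := Module.finite_of_finite K
  obtain ⟨β, hβ⟩ := FiniteField.norm_surjective K (AdjoinRoot f) b
  obtain ⟨a₀, rfl⟩ := AdjoinRoot.mk_surjective β
  obtain ⟨u, v, huv⟩ := hfg
  refine ⟨a₀ * (v * g) + u * f, ?_⟩
  let L := AlgebraicClosure K
  apply (algebraMap K L).injective
  have hb : algebraMap K L b = ((f.aroots L).map fun α => aeval α a₀).prod := by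
    have h := Matrix.algebraMap_det_aeval (L := L) (Algebra.leftMulMatrix pb.basis pb.gen) a₀
    rw [charpoly_leftMulMatrix, AdjoinRoot.minpoly_powerBasis_gen_of_monic hfm,
      aeval_algHom_apply, ← Algebra.norm_eq_matrix_det, AdjoinRoot.powerBasis_gen,
      AdjoinRoot.aeval_eq, hβ] at h
    exact h
  have hroot : ∀ (h : K[X]) (α : L), α ∈ h.aroots L → aeval α h = 0 := fun h α hα =>
    (mem_aroots'.mp hα).2
  have huv' : ∀ α : L, aeval α u * aeval α f + aeval α v * aeval α g = 1 := fun α => by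
    simpa using congrArg (aeval α) huv
  rw [Matrix.algebraMap_det_aeval, hA, aroots_mul (mul_ne_zero (pow_ne_zero _ hf.ne_zero) hg),
    aroots_pow, Multiset.map_add, Multiset.prod_add, Multiset.map_nsmul, Multiset.prod_nsmul,
    map_pow, hb]
  have h1 : (f.aroots L).map (fun α => aeval α (a₀ * (v * g) + u * f)) =
      (f.aroots L).map fun α => aeval α a₀ := by
    refine Multiset.map_congr rfl fun α hα => ?_
    have h1 := huv' α
    have h2 := hroot f α hα
    simp only [map_add, map_mul]
    linear_combination aeval α a₀ * h1 + (aeval α u - aeval α a₀ * aeval α u) * h2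
  have h2 : ((g.aroots L).map fun α => aeval α (a₀ * (v * g) + u * f)).prod = 1 := by
    refine Multiset.prod_eq_one fun t ht => ?_
    obtain ⟨α, hα, rfl⟩ := Multiset.mem_map.mp ht
    have h1 := huv' α
    have h2 := hroot g α hα
    simp only [map_add, map_mul]
    linear_combination h1 + (aeval α a₀ * aeval α v - aeval α v) * h2
  rw [h1, h2, mul_one]

end DetAeval

section UnitaryExtension
open Polynomial Matrix

variable {K : Type*} [Field K] {ι κ : Type*} [Fintype κ] [DecidableEq κ]

theorem Matrix.mul_left_cancel_of_isUnit_det {A : Matrix κ κ K} (hA : IsUnit A.det)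
    {M N : Matrix κ ι K} (h : A * M = A * N) : M = N := by
  rw [← nonsing_inv_mul_cancel_left A M hA, h, nonsing_inv_mul_cancel_left A N hA]

theorem Commute.aeval_right {A B : Matrix κ κ K} (h : Commute A B) (p : K[X]) :
    Commute A (aeval B p) := by
  rw [aeval_eq_sum_range]
  exact Commute.sum_right _ _ _ fun i _ => (h.pow_right i).smul_right _

variable [StarRing K]

theorem isUnit_det_of_gram_eq {G X₀ : Matrix κ κ K} (hG : IsUnit G.det) (hX : X₀ᴴ * G * X₀ = G) :
    IsUnit X₀.det := by
  have := congrArg det hX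
  rw [det_mul] at this
  exact isUnit_of_mul_isUnit_right (this ▸ hG)

theorem gram_eq_of_mul_eq {ι κ : Type*} [Fintype ι] [Fintype κ] {H x : Matrix ι ι K}
    {W : Matrix ι κ K} {X₀ : Matrix κ κ K}
    (hx : xᴴ * H * x = H) (hW : x * W = W * X₀) :
    X₀ᴴ * (Wᴴ * H * W) * X₀ = Wᴴ * H * W := by
  calc X₀ᴴ * (Wᴴ * H * W) * X₀ = (W * X₀)ᴴ * H * (W * X₀) := by
        simp only [conjTranspose_mul, Matrix.mul_assoc]
    _ = Wᴴ * (xᴴ * H * x) * W := by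
        rw [← hW]
        simp only [conjTranspose_mul, Matrix.mul_assoc]
    _ = Wᴴ * H * W := by rw [hx]

variable [Fintype ι] [DecidableEq ι]

/-- A unitary operator commuting with `X₀` on a nondegenerate invariant subspace extends by the
identity on the orthogonal complement. -/
theorem exists_unitary_extension {H x : Matrix ι ι K} {W : Matrix ι κ K} {X₀ Y₀ : Matrix κ κ K}
    (hH : H.IsHermitian) (hx : xᴴ * H * x = H) (hW : x * W = W * X₀)
    (hG : IsUnit (Wᴴ * H * W).det) (hXY : X₀ * Y₀ = Y₀ * X₀)
    (hY₀ : Y₀ᴴ * (Wᴴ * H * W) * Y₀ = Wᴴ * H * W) :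
    ∃ y : Matrix ι ι K, yᴴ * H * y = H ∧ x * y = y * x ∧ y.det = Y₀.det := by
  set G := Wᴴ * H * W with hGdef
  obtain ⟨P, hGP, hPW⟩ : ∃ P : Matrix κ ι K, G * P = Wᴴ * H ∧ P * W = 1 :=
    ⟨G⁻¹ * (Wᴴ * H), mul_nonsing_inv_cancel_left _ _ hG, by
      rw [Matrix.mul_assoc, ← hGdef, nonsing_inv_mul _ hG]⟩
  have hGh : Gᴴ = G := by
    rw [hGdef, conjTranspose_mul, conjTranspose_mul, conjTranspose_conjTranspose, hH.eq,
      Matrix.mul_assoc]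
  have hPG : Pᴴ * G = H * W := by
    have := congrArg conjTranspose hGP
    rwa [conjTranspose_mul G, hGh, conjTranspose_mul, conjTranspose_conjTranspose, hH.eq] at this
  have hXG : X₀ᴴ * G * X₀ = G := gram_eq_of_mul_eq hx hW
  have hX₀ := isUnit_det_of_gram_eq hG hXG
  have hPx : P * x = X₀ * P := by
    have hu : IsUnit (X₀ᴴ * G).det := by
      rw [det_mul, det_conjTranspose]
      exact hX₀.star.mul hG
    have key : X₀ᴴ * G * (P * x) = X₀ᴴ * G * (X₀ * P) := by
      calc X₀ᴴ * G * (P * x) = X₀ᴴ * (G * P) * x := by simp only [Matrix.mul_assoc]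
        _ = (W * X₀)ᴴ * H * x := by rw [hGP, conjTranspose_mul, ← Matrix.mul_assoc]
        _ = Wᴴ * (xᴴ * H * x) := by
          rw [← hW]
          simp only [conjTranspose_mul, Matrix.mul_assoc]
        _ = X₀ᴴ * G * X₀ * P := by rw [hx, hXG, hGP]
        _ = X₀ᴴ * G * (X₀ * P) := Matrix.mul_assoc _ _ _
    exact Matrix.mul_left_cancel_of_isUnit_det hu key
  refine ⟨1 + W * ((Y₀ - 1) * P), ?_, ?_, ?_⟩
  · have h1 : (Y₀ - 1)ᴴ = Y₀ᴴ - 1 := by rw [conjTranspose_sub, conjTranspose_one]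
    have h2 : G * (Y₀ - 1) + (Y₀ᴴ - 1) * G + (Y₀ᴴ - 1) * G * (Y₀ - 1) = 0 := by
      calc _ = Y₀ᴴ * G * Y₀ - G := by noncomm_ring
        _ = 0 := by rw [hY₀, sub_self]
    calc (1 + W * ((Y₀ - 1) * P))ᴴ * H * (1 + W * ((Y₀ - 1) * P))
        = H + H * W * (Y₀ - 1) * P + Pᴴ * (Y₀ᴴ - 1) * (Wᴴ * H)
          + Pᴴ * (Y₀ᴴ - 1) * (Wᴴ * H * W) * (Y₀ - 1) * P := by
          rw [conjTranspose_add, conjTranspose_one, conjTranspose_mul, conjTranspose_mul, h1]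
          simp only [Matrix.mul_add, Matrix.add_mul, Matrix.one_mul, Matrix.mul_one,
            Matrix.mul_assoc]
          abel
      _ = H + Pᴴ * (G * (Y₀ - 1) + (Y₀ᴴ - 1) * G + (Y₀ᴴ - 1) * G * (Y₀ - 1)) * P := by
          rw [← hGdef, ← hGP, ← hPG]
          simp only [Matrix.mul_add, Matrix.add_mul, Matrix.mul_assoc]
          abel
      _ = H := by rw [h2, Matrix.mul_zero, Matrix.zero_mul, add_zero]
  · rw [Matrix.mul_add, Matrix.add_mul, mul_one, one_mul]
    congr 1
    calc x * (W * ((Y₀ - 1) * P)) = W * (X₀ * (Y₀ - 1) * P) := by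
          rw [← Matrix.mul_assoc, hW]
          simp only [Matrix.mul_assoc]
      _ = W * ((Y₀ - 1) * (X₀ * P)) := by
          rw [← Matrix.mul_assoc (Y₀ - 1), Matrix.mul_sub, Matrix.sub_mul _ _ X₀, hXY, mul_one,
            one_mul]
      _ = W * ((Y₀ - 1) * P) * x := by
          rw [← hPx]
          simp only [Matrix.mul_assoc]
  · rw [det_one_add_mul_comm, Matrix.mul_assoc, hPW, mul_one, add_sub_cancel]

/-- The unitary operator `A * (A^*)⁻¹`, where `A` is a polynomial in the unitary `X₀`. -/
theorem exists_unitary_of_aeval {G X₀ : Matrix κ κ K} (hG : IsUnit G.det) (hGh : Gᴴ = G)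
    (hX : X₀ᴴ * G * X₀ = G) (a : K[X]) (ha : IsUnit (aeval X₀ a).det) :
    ∃ Y₀ : Matrix κ κ K, X₀ * Y₀ = Y₀ * X₀ ∧ Y₀ᴴ * G * Y₀ = G ∧
      Y₀.det = (aeval X₀ a).det / star (aeval X₀ a).det := by
  set A := aeval X₀ a with hA
  obtain ⟨A', hGA'⟩ : ∃ A' : Matrix κ κ K, G * A' = Aᴴ * G :=
    ⟨G⁻¹ * (Aᴴ * G), mul_nonsing_inv_cancel_left _ _ hG⟩
  have hAG : A'ᴴ * G = G * A := by
    have := congrArg conjTranspose hGA'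
    rwa [conjTranspose_mul, conjTranspose_mul, conjTranspose_conjTranspose, hGh] at this
  have hXdet := isUnit_det_of_gram_eq hG hX
  have hXA : Commute X₀ A := (Commute.refl X₀).aeval_right a
  have hdet' : A'.det = star A.det := by
    have := congrArg det hGA'
    rw [det_mul, det_mul, det_conjTranspose, mul_comm] at this
    exact hG.mul_right_cancel this
  have ha' : IsUnit A'.det := hdet' ▸ ha.star
  have hXA' : Commute X₀ A' := by
    have hu : IsUnit (X₀ᴴ * G).det := by
      rw [det_mul, det_conjTranspose]
      exact hXdet.star.mul hG
    have hXAh : Aᴴ * X₀ᴴ = X₀ᴴ * Aᴴ := by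
      rw [← conjTranspose_mul, hXA.eq, conjTranspose_mul]
    refine Matrix.mul_left_cancel_of_isUnit_det hu ?_
    calc X₀ᴴ * G * (X₀ * A') = Aᴴ * G := by rw [← Matrix.mul_assoc, hX, hGA']
      _ = Aᴴ * X₀ᴴ * G * X₀ := by
        rw [Matrix.mul_assoc, Matrix.mul_assoc, ← Matrix.mul_assoc X₀ᴴ, hX]
      _ = X₀ᴴ * (G * A') * X₀ := by
          rw [hXAh, hGA']
          simp only [Matrix.mul_assoc]
      _ = X₀ᴴ * G * (A' * X₀) := by simp only [Matrix.mul_assoc]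
  have hAA' : Commute A A' := (hXA'.symm.aeval_right a).symm
  refine ⟨A * A'⁻¹, ?_, ?_, ?_⟩
  · have h : Commute X₀ A'⁻¹ := by
      rw [← Matrix.zpow_neg_one]
      exact Matrix.Commute.zpow_right hXA' (-1)
    exact (hXA.mul_right h).eq
  · calc (A * A'⁻¹)ᴴ * G * (A * A'⁻¹) = A'⁻¹ᴴ * (Aᴴ * G) * A * A'⁻¹ := by
          rw [conjTranspose_mul]
          simp only [Matrix.mul_assoc]
      _ = A'⁻¹ᴴ * G * (A' * A) * A'⁻¹ := by
          rw [← hGA']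
          simp only [Matrix.mul_assoc]
      _ = A'⁻¹ᴴ * (G * A) := by
          rw [← hAA'.eq]
          simp only [Matrix.mul_assoc]
          rw [mul_nonsing_inv _ ha', mul_one]
      _ = G := by
          rw [← hAG, ← Matrix.mul_assoc, ← conjTranspose_mul, mul_nonsing_inv _ ha',
            conjTranspose_one, one_mul]
  · rw [det_mul, det_nonsing_inv, hdet', Ring.inverse_eq_inv, div_eq_mul_inv]

end UnitaryExtension

section CyclicDet
open Module Polynomial Matrix

variable {K : Type*} [Field K] {ι : Type*} [Fintype ι] [DecidableEq ι]

/-- The matrix description of a cyclic subspace with annihilator generated by `F`. -/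
theorem exists_matrix_of_cyclic {x : Matrix ι ι K} {w : ι → K} {F : K[X]} (hF : F.Monic)
    (hw : ∀ p : K[X], aeval x p *ᵥ w = 0 ↔ F ∣ p) :
    ∃ (d : ℕ) (W : Matrix ι (Fin d) K) (X₀ : Matrix (Fin d) (Fin d) K),
      x * W = W * X₀ ∧ X₀.charpoly = F ∧ (∀ c, W *ᵥ c = 0 → c = 0) ∧
      (∀ p : K[X], ∃ c, W *ᵥ c = aeval x p *ᵥ w) ∧
      ∀ c, ∃ p : K[X], W *ᵥ c = aeval x p *ᵥ w := by
  let pb := AdjoinRoot.powerBasis hF.ne_zero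
  have hgen : pb.gen = AdjoinRoot.root F := AdjoinRoot.powerBasis_gen _
  let W : Matrix ι (Fin pb.dim) K := Matrix.of fun i j => (x ^ (j : ℕ) *ᵥ w) i
  let P : (Fin pb.dim → K) → K[X] := fun c => ∑ i, C (c i) * X ^ (i : ℕ)
  have hWP : ∀ c, W *ᵥ c = aeval x (P c) *ᵥ w := by
    intro c
    ext i
    simp only [P, map_sum, Matrix.sum_mulVec, Finset.sum_apply, map_mul, aeval_C, map_pow, aeval_X]
    rw [mulVec, dotProduct]
    refine Finset.sum_congr rfl fun j _ => ?_
    rw [Algebra.algebraMap_eq_smul_one, smul_one_mul, smul_mulVec, Pi.smul_apply, smul_eq_mul,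
      mul_comm]
    rfl
  have hmkP : ∀ c, AdjoinRoot.mk F (P c) = ∑ i, c i • pb.basis i := by
    intro c
    simp only [P, map_sum, map_mul, map_pow, AdjoinRoot.mk_C, AdjoinRoot.mk_X, pb.basis_eq_pow,
      hgen]
    refine Finset.sum_congr rfl fun j _ => ?_
    rw [Algebra.smul_def]
    rfl
  have hcongr : ∀ p p' : K[X], AdjoinRoot.mk F p = AdjoinRoot.mk F p' →
      aeval x p *ᵥ w = aeval x p' *ᵥ w := by
    intro p p' h
    rw [AdjoinRoot.mk_eq_mk, ← hw, map_sub, sub_mulVec, sub_eq_zero] at h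
    exact h
  have hrepr : ∀ p : K[X], W *ᵥ (pb.basis.repr (AdjoinRoot.mk F p)) = aeval x p *ᵥ w := by
    intro p
    rw [hWP]
    refine hcongr _ _ ?_
    rw [hmkP, pb.basis.sum_repr]
  refine ⟨pb.dim, W, Algebra.leftMulMatrix pb.basis pb.gen, ?_, ?_, ?_, fun p => ⟨_, hrepr p⟩,
    fun c => ⟨_, hWP c⟩⟩
  · ext i j
    have h1 := congrFun (hrepr (X ^ ((j : ℕ) + 1))) i
    have h2 : (W * Algebra.leftMulMatrix pb.basis pb.gen) i j =
        (W *ᵥ (pb.basis.repr (AdjoinRoot.mk F (X ^ ((j : ℕ) + 1))))) i := by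
      rw [mul_apply, mulVec, dotProduct]
      refine Finset.sum_congr rfl fun k _ => ?_
      rw [Algebra.leftMulMatrix_eq_repr_mul, pb.basis_eq_pow, hgen, map_pow, AdjoinRoot.mk_X,
        pow_succ']
    rw [h2, h1, map_pow, aeval_X, pow_succ', ← mulVec_mulVec]
    rfl
  · rw [charpoly_leftMulMatrix]
    exact AdjoinRoot.minpoly_powerBasis_gen_of_monic hF
  · intro c hc
    rw [hWP, hw, ← AdjoinRoot.mk_eq_zero, hmkP] at hc
    ext i
    exact Fintype.linearIndependent_iff.mp pb.basis.linearIndependent c hc i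

theorem exists_aeval_eq_adjoint [StarRing K] [Finite K] {H x : Matrix ι ι K} (hx : xᴴ * H * x = H)
    (hxu : IsUnit x) (p : K[X]) : ∃ p' : K[X], H * aeval x p' = (aeval x p)ᴴ * H := by
  obtain ⟨N, hN⟩ : ∃ N, x * x ^ N = 1 := by
    obtain ⟨u, rfl⟩ := hxu
    have h : u * u ^ (Nat.card (Matrix ι ι K)ˣ - 1) = 1 := by
      rw [← pow_succ', Nat.sub_add_cancel Nat.card_pos, pow_card_eq_one']
    exact ⟨Nat.card (Matrix ι ι K)ˣ - 1, by simpa using congrArg Units.val h⟩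
  have hxi : H * x ^ N = xᴴ * H := by
    calc H * x ^ N = xᴴ * H * (x * x ^ N) := by rw [← mul_assoc, hx]
      _ = xᴴ * H := by rw [hN, mul_one]
  induction p using Polynomial.induction_on with
  | C a =>
    refine ⟨C (star a), ?_⟩
    rw [aeval_C, aeval_C, Algebra.algebraMap_eq_smul_one, Algebra.algebraMap_eq_smul_one,
      conjTranspose_smul, conjTranspose_one]
    simp
  | add p q hp hq =>
    obtain ⟨p', hp⟩ := hp
    obtain ⟨q', hq⟩ := hq
    refine ⟨p' + q', ?_⟩
    rw [map_add, map_add, conjTranspose_add, mul_add, add_mul, hp, hq]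
  | monomial n a h =>
    obtain ⟨p', hp⟩ := h
    refine ⟨p' * X ^ N, ?_⟩
    rw [pow_succ, ← mul_assoc, map_mul, map_mul, map_pow, aeval_X, ← mul_assoc, hp, mul_assoc,
      hxi, ← mul_assoc, ← conjTranspose_mul, ((Commute.refl x).aeval_right _).eq]

/-- A hermitian form on `K^n` with a unitary operator `x` having an elementary divisor of
exponent `j + 1`: every `b ^ (j + 1) / star (b ^ (j + 1))` is the determinant of a unitary operator
commuting with `x`. -/
theorem exists_unitary_commute_det_eq [StarRing K] [Finite K] {c₀ : K} (hc₀ : star c₀ ≠ c₀)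
    {H x : Matrix ι ι K} (hH : H.IsHermitian) (hHu : IsUnit H.det) (hx : xᴴ * H * x = H)
    (hxu : IsUnit x) {f : K[X]} (hf : Irreducible f) (hfm : f.Monic) {j : ℕ}
    (hfj : powNullity (toLin' (aeval x f)) (j + 2) + powNullity (toLin' (aeval x f)) j <
      2 * powNullity (toLin' (aeval x f)) (j + 1)) {b : K} (hb : b ≠ 0) :
    ∃ y : Matrix ι ι K, yᴴ * H * y = H ∧ x * y = y * x ∧
      y.det = b ^ (j + 1) / star (b ^ (j + 1)) := by
  let h : (ι → K) → (ι → K) → K := fun u v => star u ⬝ᵥ (H *ᵥ v)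
  have h_mulVec : ∀ (A : Matrix ι ι K) u v, h (A *ᵥ u) v = star u ⬝ᵥ ((Aᴴ * H) *ᵥ v) := by
    intro A u v
    simp only [h]
    rw [star_mulVec, ← mulVec_mulVec, dotProduct_mulVec (star u)]
  have symm : ∀ u v, star (h u v) = h v u := by
    intro u v
    simp only [h]
    rw [star_dotProduct, star_star, star_mulVec, hH.eq, ← dotProduct_mulVec]
  obtain ⟨u, v, hu, hv, huv⟩ : ∃ u v : ι → K, aeval x (f ^ (j + 1)) *ᵥ u = 0 ∧
      (∀ t, h v (aeval x (f ^ (j + 1)) *ᵥ t) = 0) ∧ h v (aeval x (f ^ j) *ᵥ u) ≠ 0 := by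
    set N := toLin' (aeval x f) with hN
    have hNpow : ∀ i t, (N ^ i) t = aeval x (f ^ i) *ᵥ t := by
      intro i t
      rw [hN, ← toLin'_pow, toLin'_apply, map_pow]
    obtain ⟨z, ⟨hz, u, hu⟩, hz'⟩ : ∃ z ∈ LinearMap.ker N ⊓ LinearMap.range (N ^ j),
        z ∉ LinearMap.range (N ^ (j + 1)) := by
      by_contra! hle
      have h1 := powNullity_succ N j
      have h2 : powNullity N (j + 2) = _ := powNullity_succ N (j + 1)
      have h3 := Submodule.finrank_mono (le_inf inf_le_left hle :
        LinearMap.ker N ⊓ LinearMap.range (N ^ j) ≤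
          LinearMap.ker N ⊓ LinearMap.range (N ^ (j + 1)))
      omega
    obtain ⟨c, hcz, hc⟩ := Submodule.exists_le_ker_of_notMem hz'
    have hcv : ∀ t, h (star ((fun i => c (Pi.single i 1)) ᵥ* H⁻¹)) t = c t := by
      intro t
      simp only [h]
      rw [star_star, dotProduct_mulVec, vecMul_vecMul, nonsing_inv_mul _ hHu, vecMul_one,
        LinearMap.pi_apply_eq_sum_univ c t, dotProduct]
      refine Finset.sum_congr rfl fun i _ => ?_
      rw [smul_eq_mul, mul_comm]
      congr 2
      ext k
      simp [Pi.single_apply, eq_comm]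
    refine ⟨u, star ((fun i => c (Pi.single i 1)) ᵥ* H⁻¹), ?_, fun t => ?_, ?_⟩
    · rw [← hNpow, pow_succ', Module.End.mul_apply, hu]
      exact hz
    · rw [hcv, ← hNpow]
      exact hc ⟨t, rfl⟩
    · rw [hcv, ← hNpow, hu]
      exact hcz
  choose τ hτ using exists_aeval_eq_adjoint hx hxu
  let _ : Module K[X] (ι → K) :=
    Module.compHom (ι → K) (aeval (toLin' x) : K[X] →ₐ[K] Module.End K (ι → K)).toRingHom
  have hsmul : ∀ (p : K[X]) (t : ι → K), p • t = aeval x p *ᵥ t := fun p t => by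
    rw [← toLin'_apply, ← aeval_toLin']
    rfl
  have hCsmul : ∀ (a : K) (t : ι → K), (C a : K[X]) • t = a • t := fun a t => by
    rw [hsmul, aeval_C, Algebra.algebraMap_eq_smul_one, smul_mulVec, one_mulVec]
  have adj_left : ∀ (p : K[X]) u v, h (p • u) v = h u (τ p • v) := fun p u v => by
    rw [hsmul, hsmul, h_mulVec, ← hτ, ← mulVec_mulVec]
  obtain ⟨g, w, hfg, hg, hann, hnd⟩ := exists_cyclic_nondegenerate hc₀ h τ
    (fun u u' v => by simp only [h, star_add, add_dotProduct])
    (fun u v v' => by simp only [h, mulVec_add, dotProduct_add])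
    (fun a u v => by simp only [h, hCsmul, star_smul, smul_dotProduct, smul_eq_mul])
    (fun a u v => by simp only [h, hCsmul, mulVec_smul, dotProduct_smul, smul_eq_mul])
    symm (fun v hv => by
      have : H *ᵥ v = 0 := dotProduct_eq_zero _ fun t => by
        rw [dotProduct_comm, ← star_star t]
        exact hv (star t)
      rw [← one_mulVec v, ← nonsing_inv_mul _ hHu, ← mulVec_mulVec, this, mulVec_zero])
    adj_left (fun p u v => by rw [← symm, adj_left, symm])
    hf (by rw [hsmul, hu]) (fun t => by rw [hsmul, hv]) (by rw [hsmul]; exact huv)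
  let g' := g * C g.leadingCoeff⁻¹
  have hg' : g'.Monic := monic_mul_leadingCoeff_inv hg
  have hlc : IsUnit (C g.leadingCoeff⁻¹) :=
    isUnit_C.mpr (inv_ne_zero (leadingCoeff_ne_zero.mpr hg)).isUnit
  have hfg' : IsCoprime f g' := (isCoprime_mul_unit_right_right hlc f g).mpr hfg
  obtain ⟨d, W, X₀, hxW, hcp, hinj, hW1, hW2⟩ := exists_matrix_of_cyclic (x := x) (w := w)
    ((hfm.pow (j + 1)).mul hg') (fun p => by
      rw [← hsmul, hann, ← mul_assoc, hlc.mul_right_dvd])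
  have hG : IsUnit (Wᴴ * H * W).det := by
    rw [isUnit_iff_ne_zero, Ne, ← exists_mulVec_eq_zero_iff]
    rintro ⟨c, hc0, hc⟩
    refine hc0 (hinj c ?_)
    obtain ⟨p, hp⟩ := hW2 c
    rw [hp, ← hsmul]
    refine hnd p fun s => ?_
    obtain ⟨e, he⟩ := hW1 s
    rw [hsmul, hsmul, ← he, ← hp]
    simp only [h]
    rw [star_mulVec, ← dotProduct_mulVec, mulVec_mulVec, mulVec_mulVec, hc, dotProduct_zero]
  have hGh : (Wᴴ * H * W)ᴴ = Wᴴ * H * W := isHermitian_conjTranspose_mul_mul W hH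
  obtain ⟨a, ha⟩ := Matrix.exists_det_aeval_eq_pow X₀ hf hfm hfg' hg'.ne_zero hcp b
  obtain ⟨Y₀, hXY, hY, hdet⟩ := exists_unitary_of_aeval hG hGh (gram_eq_of_mul_eq hx hxW) a
    (ha ▸ (pow_ne_zero _ hb).isUnit)
  obtain ⟨y, hy, hxy, hydet⟩ := exists_unitary_extension hH hx hxW hG hXY hY
  exact ⟨y, hy, hxy, by rw [hydet, hdet, ha]⟩

end CyclicDet

section ClassSplitting

variable {K : Type*} [Field K]

/-- A subgroup `D` of the norm one elements of the field with `q²` elements that contains all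
`b ^ m / (b ^ m) ^ q` with `m ∈ S` and lies in the `r`-th powers, where `r` is the greatest common
divisor of `q + 1` and `S`, has index `r`. -/
theorem mul_card_eq_of_forall_mem [Fintype K] {q : ℕ} (hq : 1 < q) (hcard : Fintype.card K = q ^ 2)
    {D : Subgroup Kˣ} {S : Set ℕ} {r : ℕ} (hr1 : r ∣ q + 1)
    (hr3 : ∀ s : ℕ, s ∣ q + 1 → (∀ m ∈ S, s ∣ m) → s ∣ r)
    (hD : ∀ d ∈ D, d ^ ((q + 1) / r) = 1) (hS : ∀ m ∈ S, ∀ b : Kˣ, b ^ m / (b ^ m) ^ q ∈ D) :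
    r * Nat.card D = q + 1 := by
  obtain ⟨ζ, hζ⟩ := IsCyclic.exists_generator (α := Kˣ)
  have hζo : orderOf ζ = (q - 1) * (q + 1) := by
    rw [orderOf_eq_card_of_forall_mem_zpowers hζ, Nat.card_units,
      Nat.card_eq_fintype_card, hcard, mul_comm, ← Nat.sq_sub_sq, one_pow]
  have h1 : Nat.card D ∣ (q + 1) / r := by
    rw [← IsCyclic.exponent_eq_card, Monoid.exponent_dvd_iff_forall_pow_eq_one]
    exact fun d => Subtype.ext (hD d d.2)
  have h2 : r * Nat.card D ∣ q + 1 := by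
    have := Nat.mul_dvd_mul_left r h1
    rwa [Nat.mul_div_cancel' hr1] at this
  obtain ⟨s, hs⟩ := (dvd_mul_left _ r).trans h2
  have hpos : 0 < Nat.card D := Nat.card_pos
  have h3 : s ∣ r := hr3 s ⟨_, by rw [hs, mul_comm]⟩ fun m hm => by
    have h4 : (ζ ^ m / (ζ ^ m) ^ q) ^ Nat.card D = 1 :=
      congrArg Subtype.val (pow_card_eq_one' (x := (⟨_, hS m hm ζ⟩ : D)))
    have h5 : ζ ^ ((q - 1) * (m * Nat.card D)) = 1 := by
      rw [div_pow, div_eq_one, ← pow_mul, ← pow_mul, ← pow_mul] at h4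
      rw [Nat.sub_mul, one_mul, pow_sub _ (Nat.le_mul_of_pos_left _ (by omega)), mul_inv_eq_one, h4]
      congr 1
      ring
    rw [← orderOf_dvd_iff_pow_eq_one, hζo] at h5
    have h6 := Nat.dvd_of_mul_dvd_mul_left (by omega) h5
    rw [hs, mul_comm m] at h6
    exact Nat.dvd_of_mul_dvd_mul_left hpos h6
  refine Nat.dvd_antisymm h2 ?_
  rw [hs, mul_comm r]
  exact Nat.mul_dvd_mul_left _ h3

/-- The unitary matrices for the form `B` commuting with `x`. -/
def unitaryCentralizer {n : ℕ} [StarRing K] (B x : Matrix (Fin n) (Fin n) K) :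
    Subgroup (Matrix (Fin n) (Fin n) K)ˣ where
  carrier := {y | y.val * B * y.valᴴ = B ∧ x * y = y * x}
  one_mem' := by simp
  mul_mem' := by
    rintro a b ⟨ha, ha'⟩ ⟨hb, hb'⟩
    constructor
    · rw [Units.val_mul, conjTranspose_mul]
      calc a.val * b * B * (b.valᴴ * a.valᴴ) = a * (b * B * b.valᴴ) * a.valᴴ := by noncomm_ring
        _ = B := by rw [hb, ha]
    · exact Commute.mul_right ha' hb'
  inv_mem' := by
    rintro a ⟨ha, ha'⟩
    constructor
    · have h1 : a.valᴴ * (a⁻¹).valᴴ = 1 := by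
        rw [← conjTranspose_mul, Units.inv_mul, conjTranspose_one]
      calc (a⁻¹).val * B * (a⁻¹).valᴴ = (a⁻¹).val * (a * B * a.valᴴ) * (a⁻¹).valᴴ := by rw [ha]
        _ = ((a⁻¹).val * a) * B * (a.valᴴ * (a⁻¹).valᴴ) := by noncomm_ring
        _ = B := by rw [h1, Units.inv_mul, one_mul, mul_one]
    · exact Commute.units_inv_right ha'

theorem mul_mul_conjTranspose_eq_iff [StarRing K] {ι : Type*} [Fintype ι] [DecidableEq ι]
    {B y : Matrix ι ι K} (hB : IsUnit B.det) : y * B * yᴴ = B ↔ yᴴ * B⁻¹ * y = B⁻¹ := by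
  constructor
  · intro h
    have h1 : y * (B * yᴴ * B⁻¹) = 1 := by
      rw [← mul_assoc, ← mul_assoc, h, mul_nonsing_inv _ hB]
    rw [mul_eq_one_comm] at h1
    rw [← one_mul (yᴴ * B⁻¹ * y), ← nonsing_inv_mul _ hB, mul_assoc, mul_assoc yᴴ, ← mul_assoc B,
      ← mul_assoc (B * yᴴ), h1, mul_one]
  · intro h
    have h1 : (B * yᴴ * B⁻¹) * y = 1 := by
      rw [mul_assoc, mul_assoc, ← mul_assoc yᴴ, h, mul_nonsing_inv _ hB]
    rw [mul_eq_one_comm] at h1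
    rw [← mul_one (y * B * yᴴ), ← nonsing_inv_mul _ hB, ← mul_assoc, mul_assoc y, mul_assoc y, h1,
      one_mul]

/-- The automorphism `a ↦ a ^ q` of the field with `q²` elements, as a star structure. -/
abbrev frobeniusStarRing {p k q : ℕ} [Fact p.Prime] [CharP K p] (hq : q = p ^ k)
    (h : ∀ a : K, (a ^ q) ^ q = a) : StarRing K where
  star a := a ^ q
  star_involutive := h
  star_mul a b := by rw [mul_pow, mul_comm]
  star_add a b := by
    have := add_pow_char_pow (p := p) (n := k) a b
    rwa [← hq] at this

theorem exists_pow_ne_self [Fintype K] {q : ℕ} (hq : 1 < q) (hcard : Fintype.card K = q ^ 2) :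
    ∃ c : K, c ^ q ≠ c := by
  by_contra! h
  have h1 := FiniteField.X_pow_card_sub_X_natDegree_eq K hq
  have h2 := Polynomial.card_le_degree_of_subset_roots
    (p := (Polynomial.X ^ q - Polynomial.X : Polynomial K)) (Z := Finset.univ) fun c _ => by
      rw [Polynomial.mem_roots (FiniteField.X_pow_card_sub_X_ne_zero K hq)]
      simp [h]
  rw [Finset.card_univ, hcard, h1] at h2
  nlinarith

theorem card_unitaryCentralizer [Finite K] [StarRing K] {n : ℕ} (B x : Matrix (Fin n) (Fin n) K) :
    Nat.card {y : Matrix (Fin n) (Fin n) K // IsUnit y ∧ y * B * yᴴ = B ∧ x * y = y * x} =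
      Nat.card {y : Matrix (Fin n) (Fin n) K //
        IsUnit y ∧ y * B * yᴴ = B ∧ x * y = y * x ∧ y.det = 1} *
      Nat.card ((unitaryCentralizer B x).map (Units.map detMonoidHom)) := by
  let φ := (Units.map (detMonoidHom (n := Fin n) (R := K))).comp (unitaryCentralizer B x).subtype
  have h1 : Nat.card (unitaryCentralizer B x) = Nat.card {y : Matrix (Fin n) (Fin n) K //
      IsUnit y ∧ y * B * yᴴ = B ∧ x * y = y * x} :=
    Nat.card_eq_of_bijective (fun y => ⟨y.1.1, y.1.isUnit, y.2.1, y.2.2⟩)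
      ⟨fun a b hab => Subtype.ext (Units.ext (congrArg Subtype.val hab)),
        fun ⟨y, hy, h⟩ => ⟨⟨hy.unit, h⟩, rfl⟩⟩
  have h2 : Nat.card φ.ker = Nat.card {y : Matrix (Fin n) (Fin n) K //
      IsUnit y ∧ y * B * yᴴ = B ∧ x * y = y * x ∧ y.det = 1} :=
    Nat.card_eq_of_bijective (fun y => ⟨y.1.1.1, y.1.1.isUnit, y.1.2.1, y.1.2.2,
        congrArg Units.val y.2⟩)
      ⟨fun a b hab => Subtype.ext (Subtype.ext (Units.ext (congrArg Subtype.val hab))),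
        fun ⟨y, hy, h, h', h''⟩ => ⟨⟨⟨hy.unit, h, h'⟩, Units.ext h''⟩, rfl⟩⟩
  have h3 : (unitaryCentralizer B x).map (Units.map detMonoidHom) = φ.range := by
    rw [MonoidHom.range_comp, Subgroup.range_subtype]
  rw [← h1, ← h2, h3, ← Subgroup.index_ker, Subgroup.card_mul_index]

end ClassSplitting

/-- Let `x` be a determinant-one element of the unitary group of an invertible hermitian
matrix `B` over the field with `q²` elements, and let
`r = gcd(q+1, gcd{m ≥ 1 : x has an elementary divisor of exponent m})` (characterized below
by divisibility).  Then `(q+1)·|C_{SU}(x)| = r·|C_U(x)|`; equivalently, the unitary class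
of `x` splits into exactly `r` special unitary classes. -/
theorem special_unitary_class_splitting
    {p k : ℕ} [Fact p.Prime] (hk : k ≠ 0) (q : ℕ) (hq : q = p ^ k)
    {K : Type*} [Field K] [Fintype K] (hcard : Fintype.card K = q ^ 2)
    {n : ℕ} (B : Matrix (Fin n) (Fin n) K) (hB : IsUnit B)
    (hBherm : hermStar q B = B)
    (x : Matrix (Fin n) (Fin n) K) (hx : IsUnit x)
    (hxB : x * B * hermStar q x = B) (hdetx : x.det = 1)
    (r : ℕ)
    (hr1 : r ∣ (q + 1))
    (hr2 : ∀ m : ℕ, 1 ≤ m → HasEDOfExponent x m → r ∣ m)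
    (hr3 : ∀ s : ℕ, s ∣ (q + 1) → (∀ m : ℕ, 1 ≤ m → HasEDOfExponent x m → s ∣ m) →
        s ∣ r) :
    (q + 1) * Nat.card {y : Matrix (Fin n) (Fin n) K //
        IsUnit y ∧ y * B * hermStar q y = B ∧ x * y = y * x ∧ y.det = 1} =
      r * Nat.card {y : Matrix (Fin n) (Fin n) K //
        IsUnit y ∧ y * B * hermStar q y = B ∧ x * y = y * x} := by
  have hp : p.Prime := Fact.out
  have hq1 : 1 < q := hq ▸ Nat.one_lt_pow hk hp.one_lt
  have : CharP K p := by
    obtain ⟨p', hp'⟩ := CharP.exists K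
    obtain ⟨m, hp'', hm⟩ := FiniteField.card K p'
    have h : p ∣ p' ^ (m : ℕ) := by
      rw [← hm, hcard, hq]
      exact dvd_pow (dvd_pow_self p hk) two_ne_zero
    rwa [(Nat.prime_dvd_prime_iff_eq hp hp'').mp (hp.dvd_of_dvd_pow h)]
  let _ : StarRing K := frobeniusStarRing hq fun a => by
    rw [← pow_mul, ← sq, ← hcard, FiniteField.pow_card]
  have hstar : ∀ a : K, star a = a ^ q := fun a => rfl
  have hherm : ∀ X : Matrix (Fin n) (Fin n) K, hermStar q X = Xᴴ := fun X => rfl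
  simp only [hherm] at hBherm hxB ⊢
  have hBdet := (isUnit_iff_isUnit_det B).mp hB
  rw [card_unitaryCentralizer B x]
  obtain ⟨c₀, hc₀⟩ := exists_pow_ne_self hq1 hcard
  rw [← mul_card_eq_of_forall_mem (D := (unitaryCentralizer B x).map (Units.map detMonoidHom))
    (S := {m | 1 ≤ m ∧ HasEDOfExponent x m}) hq1 hcard hr1
    (fun s hs h => hr3 s hs fun m hm hm' => h m ⟨hm, hm'⟩)]
  · ring
  · rintro _ ⟨y, ⟨hy, hy'⟩, rfl⟩
    exact Units.ext (det_pow_eq_one_of_commute hq hB y.isUnit hy hy' hr1 hr2)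
  · rintro m ⟨hm, hm'⟩ b
    obtain ⟨j, rfl⟩ := Nat.exists_eq_add_of_le' hm
    obtain ⟨f, hfm, hf, hfj⟩ := (hasEDOfExponent_succ_iff x j).mp hm'
    obtain ⟨y, hy, hxy, hdet⟩ := exists_unitary_commute_det_eq hc₀ (IsHermitian.inv hBherm)
      ((isUnit_nonsing_inv_det_iff).mpr hBdet) ((mul_mul_conjTranspose_eq_iff hBdet).mp hxB) hx
      hf hfm hfj b.ne_zero
    have hyu : IsUnit y := by
      rw [isUnit_iff_isUnit_det, hdet, hstar, isUnit_iff_ne_zero]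
      exact div_ne_zero (pow_ne_zero _ b.ne_zero) (pow_ne_zero _ (pow_ne_zero _ b.ne_zero))
    exact ⟨hyu.unit, ⟨(mul_mul_conjTranspose_eq_iff hBdet).mpr hy, hxy⟩,
      Units.ext (by simpa [hstar] using hdet)⟩
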